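/- Let ρ ≥ 1 be a Steiner ratio bound, and let (S, α) be an instance of Min-3CSG with primary colors {r, b, y} such that S_rby = S_r ∩ S_b ∩ S_y is nonempty. Define the following graphs on subsets of S: G_rb, G_ry, G_by are minimum CSGs for the restricted two-color instances (S_{{r,b}}, α_{{r,b}}), (S_{{r,y}}, α_{{r,y}}), (S_{{b,y}}, α_{{b,y}}) respectively; G_r, G_b, G_y are minimum spanning trees of S_r, S_b, S_y respectively; H is a minimum spanning tree of S_rby; G_{rb:H} is an edge set of minimum weight such that (S_{{r,b}}, E(H) ∪ G_{rb:H}) is a CSG for (S_{{r,b}}, α_{{r,b}}), and G_{y:H} is an edge set of minimum weight such that (S_y, E(H) ∪ G_{y:H}) is connected; G_{ry:H}, G_{b:H}, G_{by:H}, G_{r:H} are defined analogously. Put G_1 = G_rb ∪ G_y, G_2 = G_ry ∪ G_b, G_3 = G_by ∪ G_r, G_4 = H ∪ G_{rb:H} ∪ G_{y:H}, G_5 = H ∪ G_{ry:H} ∪ G_{b:H}, G_6 = H ∪ G_{by:H} ∪ G_{r:H}. Then each G_i (1 ≤ i ≤ 6), viewed as a graph on S, is a colored spanning graph for (S, α),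 and min_{1 ≤ i ≤ 6} w(G_i) ≤ (2 − 1/(3 + 2ρ)) · OPT(S, α). -/

import Mathlib

/-! Split the edges of an optimal colored spanning graph `E` into the black ones (carrying all three
colors), of weight `W`, and the others, of weight `N`. Let `A c` be the weight of the non-black edges
carrying the color `c`.

The edges of `E` carrying a color of `γ` form a colored spanning graph for the colors in `γ`, so
`w(G₁) ≤ (N + W) + (A y + W)`, and similarly for `G₂`, `G₃`. Once the black points are joined by `H`,
the black edges of `E` are superfluous, so `w(G₄) ≤ w(H) + N + A y`, and similarly for `G₅`, `G₆`.
Since a non-black edge has at most two colors, `A r + A b + A y ≤ 2 N`.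

The Steiner ratio enters through `weight_H_le`: `w(H) ≤ W + ρ * A c` for every color `c`. Each connected
component of the graph of non-black `c`-edges is a connected graph joining the black points
it contains, so a minimum spanning tree of these black points costs at most `ρ` times the component
(`steiner_components`). These trees and the black edges together connect all black points.

Summing, `w(G₁) + w(G₂) + w(G₃) ≤ 5 N + 6 W` and
`w(G₄) + w(G₅) + w(G₆) ≤ (5 + 2 ρ) N + 3 W`; weighting the two bounds by `2 + 2 ρ` and `1` makes the
coefficients of `N` and `W` equal and gives the claim. -/

open scoped BigOperators

namespace MCSG

noncomputable section

/-- Points in the plane. -/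
abbrev Pt : Type := EuclideanSpace ℝ (Fin 2)

noncomputable instance : DecidableEq Pt := Classical.decEq _

/-- Euclidean length of an edge (unordered pair of points). -/
def edgeWeight : Sym2 Pt → ℝ :=
  Sym2.lift ⟨fun p q => dist p q, fun p q => dist_comm p q⟩

/-- Total weight of an edge set. -/
def totalWeight (E : Finset (Sym2 Pt)) : ℝ := ∑ e ∈ E, edgeWeight e

/-- The color of an edge: the common primary colors of its endpoints. -/
def edgeColor {k : ℕ} (α : Pt → Finset (Fin k)) : Sym2 Pt → Finset (Fin k) :=
  Sym2.lift ⟨fun p q => α p ∩ α q, fun p q => Finset.inter_comm _ _⟩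

/-- `E` is a set of edges on the vertex set `S` (no loops). -/
def EdgesOn (S : Finset Pt) (E : Finset (Sym2 Pt)) : Prop :=
  ∀ e ∈ E, ¬ e.IsDiag ∧ ∀ p ∈ e, p ∈ S

/-- One step in the subgraph of the edge set `E` induced by the vertex set `V`. -/
def AdjIn (V : Set Pt) (E : Finset (Sym2 Pt)) (p q : Pt) : Prop :=
  p ∈ V ∧ q ∈ V ∧ p ≠ q ∧ s(p, q) ∈ E

/-- Reachability in the subgraph of `E` induced by `V`. -/
def ReachIn (V : Set Pt) (E : Finset (Sym2 Pt)) : Pt → Pt → Prop :=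
  Relation.ReflTransGen (AdjIn V E)

/-- The subgraph of `E` induced by `V` is connected. -/
def ConnOn (V : Finset Pt) (E : Finset (Sym2 Pt)) : Prop :=
  ∀ p ∈ V, ∀ q ∈ V, ReachIn (↑V) E p q

/-- The set `S_c` of points of `S` having primary color `c`. -/
def Sc {k : ℕ} (S : Finset Pt) (α : Pt → Finset (Fin k)) (c : Fin k) : Finset Pt :=
  S.filter fun p => c ∈ α p

/-- `(S, E)` is a colored spanning graph for the instance `(S, α)`. -/
def IsCSG {k : ℕ} (S : Finset Pt) (α : Pt → Finset (Fin k)) (E : Finset (Sym2 Pt)) : Prop :=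
  EdgesOn S E ∧ ∀ c : Fin k, ConnOn (Sc S α c) E

/-- `(S, E)` is a minimum colored spanning graph for `(S, α)`. -/
def IsMinCSG {k : ℕ} (S : Finset Pt) (α : Pt → Finset (Fin k)) (E : Finset (Sym2 Pt)) : Prop :=
  IsCSG S α E ∧ ∀ E' : Finset (Sym2 Pt), IsCSG S α E' → totalWeight E ≤ totalWeight E'

/-- `T` is a spanning tree of (the complete graph on) the point set `P`. -/
def IsSpanningTreeOn (P : Finset Pt) (T : Finset (Sym2 Pt)) : Prop :=
  EdgesOn P T ∧ ConnOn P T ∧ T.card + 1 = P.card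

/-- `T` is a minimum spanning tree of the point set `P`. -/
def IsMST (P : Finset Pt) (T : Finset (Sym2 Pt)) : Prop :=
  IsSpanningTreeOn P T ∧ ∀ T', IsSpanningTreeOn P T' → totalWeight T ≤ totalWeight T'

/-- Restricted coloring `α_γ`. -/
def restrictColor {k : ℕ} (γ : Finset (Fin k)) (α : Pt → Finset (Fin k)) : Pt → Finset (Fin k) :=
  fun p => α p ∩ γ

/-- Restricted point set `S_γ`. -/
def Sγ {k : ℕ} (S : Finset Pt) (α : Pt → Finset (Fin k)) (γ : Finset (Fin k)) : Finset Pt :=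
  S.filter fun p => (α p ∩ γ).Nonempty

/-- `ρ` is a Steiner ratio bound. -/
def SteinerRatioBound (ρ : ℝ) : Prop :=
  ∀ P Q : Finset Pt, P.Nonempty → P ⊆ Q →
    ∀ T : Finset (Sym2 Pt), EdgesOn Q T → ConnOn Q T →
      ∀ M : Finset (Sym2 Pt), IsMST P M → totalWeight M ≤ ρ * totalWeight T

end


/-! ### Weights and reachability -/

lemma edgeWeight_nonneg (e : Sym2 Pt) : 0 ≤ edgeWeight e := by
  induction e with
  | _ p q => exact (dist_nonneg : 0 ≤ dist p q)

lemma totalWeight_nonneg (E : Finset (Sym2 Pt)) : 0 ≤ totalWeight E :=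
  Finset.sum_nonneg fun e _ => edgeWeight_nonneg e

lemma totalWeight_mono {E F : Finset (Sym2 Pt)} (h : E ⊆ F) : totalWeight E ≤ totalWeight F :=
  Finset.sum_le_sum_of_subset_of_nonneg h fun e _ _ => edgeWeight_nonneg e

lemma totalWeight_union_le (E F : Finset (Sym2 Pt)) :
    totalWeight (E ∪ F) ≤ totalWeight E + totalWeight F := by
  have h := Finset.sum_union_inter (s₁ := E) (s₂ := F) (f := edgeWeight)
  have h2 := totalWeight_nonneg (E ∩ F)
  unfold totalWeight at *
  linarith

lemma AdjIn.mono {V V' : Set Pt} {E E' : Finset (Sym2 Pt)} (hV : V ⊆ V') (hE : E ⊆ E') {p q : Pt}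
    (h : AdjIn V E p q) : AdjIn V' E' p q :=
  ⟨hV h.1, hV h.2.1, h.2.2.1, hE h.2.2.2⟩

lemma ReachIn.mono {V V' : Set Pt} {E E' : Finset (Sym2 Pt)} (hV : V ⊆ V') (hE : E ⊆ E') {p q : Pt}
    (h : ReachIn V E p q) : ReachIn V' E' p q :=
  Relation.ReflTransGen.mono (fun _ _ h => AdjIn.mono hV hE h) _ _ h

lemma AdjIn.symm {V : Set Pt} {E : Finset (Sym2 Pt)} {p q : Pt}
    (h : AdjIn V E p q) : AdjIn V E q p :=
  ⟨h.2.1, h.1, h.2.2.1.symm, by rw [Sym2.eq_swap]; exact h.2.2.2⟩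

lemma ReachIn.symm {V : Set Pt} {E : Finset (Sym2 Pt)} {p q : Pt}
    (h : ReachIn V E p q) : ReachIn V E q p := by
  induction h with
  | refl => exact Relation.ReflTransGen.refl
  | tail _ h ih => exact Relation.ReflTransGen.head h.symm ih

lemma ReachIn.of_adj {V V' : Set Pt} {E E' : Finset (Sym2 Pt)}
    (hadj : ∀ p q, AdjIn V E p q → ReachIn V' E' p q) {p q : Pt}
    (h : ReachIn V E p q) : ReachIn V' E' p q := by
  induction h with
  | refl => exact Relation.ReflTransGen.refl
  | tail _ h ih => exact Relation.ReflTransGen.trans ih (hadj _ _ h)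

lemma ConnOn.mono {V : Finset Pt} {E E' : Finset (Sym2 Pt)} (h : ConnOn V E) (hE : E ⊆ E') :
    ConnOn V E' :=
  fun p hp q hq => (h p hp q hq).mono subset_rfl hE

lemma EdgesOn.mono {V V' : Finset Pt} {E : Finset (Sym2 Pt)} (h : EdgesOn V E) (hV : V ⊆ V') :
    EdgesOn V' E :=
  fun e he => ⟨(h e he).1, fun p hp => hV ((h e he).2 p hp)⟩

lemma EdgesOn.union {V : Finset Pt} {E F : Finset (Sym2 Pt)} (hE : EdgesOn V E)
    (hF : EdgesOn V F) : EdgesOn V (E ∪ F) := by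
  intro e he
  rcases Finset.mem_union.1 he with h | h
  · exact hE e h
  · exact hF e h

lemma connOn_of_root {V : Finset Pt} {E : Finset (Sym2 Pt)} (x : Pt)
    (h : ∀ z ∈ V, ReachIn (↑V) E x z) : ConnOn V E :=
  fun p hp q hq => Relation.ReflTransGen.trans (h p hp).symm (h q hq)

/-! ### Spanning trees -/

lemma exists_crossing {V : Set Pt} {E : Finset (Sym2 Pt)} (A : Finset Pt) {p q : Pt}
    (h : ReachIn V E p q) (hp : p ∈ A) (hq : q ∉ A) : ∃ x ∈ A, ∃ y, y ∉ A ∧ AdjIn V E x y := by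
  induction h with
  | refl => exact absurd hp hq
  | @tail b c _ hbc ih =>
    by_cases hb : b ∈ A
    · exact ⟨b, hb, c, hq, hbc⟩
    · exact ih hb

/-- Inside a connected graph, trees of every admissible size can be grown one edge at a time. -/
lemma exists_subtree {P : Finset Pt} {E : Finset (Sym2 Pt)} (hc : ConnOn P E) (n : ℕ)
    (hn : n + 1 ≤ P.card) :
    ∃ V ⊆ P, V.card = n + 1 ∧ ∃ T ⊆ E, IsSpanningTreeOn V T := by
  induction n with
  | zero =>
    obtain ⟨p, hp⟩ := Finset.card_pos.1 (by omega : 0 < P.card)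
    refine ⟨{p}, by simpa using hp, by simp, ∅, by simp, ?_, ?_, by simp⟩
    · intro e he; simp at he
    · intro a ha b hb
      rw [Finset.mem_singleton] at ha hb
      subst ha; subst hb
      exact Relation.ReflTransGen.refl
  | succ n ih =>
    obtain ⟨V, hVP, hV, T, hTE, hT1, hT2, hT3⟩ := ih (by omega)
    obtain ⟨p, hp⟩ := Finset.card_pos.1 (by omega : 0 < V.card)
    obtain ⟨q, hqP, hq⟩ := Finset.exists_mem_notMem_of_card_lt_card (by omega : V.card < P.card)
    obtain ⟨x, hx, y, hy, hxy⟩ := exists_crossing V (hc p (hVP hp) q hqP) hp hq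
    have hnot : s(x, y) ∉ T := fun h => hy ((hT1 _ h).2 y (by simp))
    have hsub : (V : Set Pt) ⊆ ((insert y V : Finset Pt) : Set Pt) := by
      exact_mod_cast Finset.subset_insert y V
    refine ⟨insert y V, ?_, ?_, insert s(x, y) T, ?_, ?_, ?_, ?_⟩
    · exact Finset.insert_subset hxy.2.1 hVP
    · rw [Finset.card_insert_of_notMem hy, hV]
    · exact Finset.insert_subset hxy.2.2.2 hTE
    · intro e he
      rcases Finset.mem_insert.1 he with rfl | he
      · refine ⟨by simpa using hxy.2.2.1, fun z hz => ?_⟩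
        rcases Sym2.mem_iff.1 hz with rfl | rfl
        · exact Finset.mem_insert_of_mem hx
        · exact Finset.mem_insert_self _ _
      · exact hT1.mono (Finset.subset_insert y V) e he
    · refine connOn_of_root x fun z hz => ?_
      rcases Finset.mem_insert.1 hz with rfl | hz
      · exact Relation.ReflTransGen.single
          ⟨hsub hx, by simp, hxy.2.2.1, Finset.mem_insert_self _ _⟩
      · exact (hT2 x hx z hz).mono hsub (Finset.subset_insert _ _)
    · rw [Finset.card_insert_of_notMem hnot, Finset.card_insert_of_notMem hy, hT3]

lemma exists_spanningTree {P : Finset Pt} (hP : P.Nonempty) {E : Finset (Sym2 Pt)}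
    (hc : ConnOn P E) : ∃ T ⊆ E, IsSpanningTreeOn P T := by
  have h0 := hP.card_pos
  obtain ⟨V, hVP, hV, T, hT, hs⟩ := exists_subtree hc (P.card - 1) (by omega)
  obtain rfl := Finset.eq_of_subset_of_card_le hVP (by omega)
  exact ⟨T, hT, hs⟩

lemma IsMST.weight_le {P : Finset Pt} {M E : Finset (Sym2 Pt)} (hM : IsMST P M)
    (hc : ConnOn P E) : totalWeight M ≤ totalWeight E := by
  have hP : P.Nonempty := by
    have := hM.1.2.2
    exact Finset.card_pos.1 (by omega)
  obtain ⟨T, hT, hs⟩ := exists_spanningTree hP hc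
  exact (hM.2 T hs).trans (totalWeight_mono hT)

lemma exists_isMST {P : Finset Pt} (hP : P.Nonempty) : ∃ M, IsMST P M := by
  classical
  have hc : ConnOn P P.sym2 := by
    intro p hp q hq
    by_cases h : p = q
    · subst h; exact Relation.ReflTransGen.refl
    · exact Relation.ReflTransGen.single ⟨hp, hq, h, by simp [hp, hq]⟩
  obtain ⟨T, hT, hs⟩ := exists_spanningTree hP hc
  obtain ⟨M, hM, hmin⟩ := Finset.exists_min_image
    (P.sym2.powerset.filter fun T => IsSpanningTreeOn P T) totalWeight
    ⟨T, by simp [hT, hs]⟩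
  refine ⟨M, (Finset.mem_filter.1 hM).2, fun T' hT' => hmin T' ?_⟩
  refine Finset.mem_filter.2 ⟨Finset.mem_powerset.2 fun e he => ?_, hT'⟩
  exact Finset.mem_sym2_iff.2 fun p hp => (hT'.1 e he).2 p hp

/-! ### The Steiner ratio for disconnected graphs -/

/-- A version of the Steiner ratio bound for possibly disconnected graphs: the vertices of `Q \ P` can
be dispensed with, at the cost of a factor `ρ`, without separating points of `P`. One component is
split off at a time. -/
lemma steiner_components {ρ : ℝ} (hρ : 1 ≤ ρ) (hst : SteinerRatioBound ρ) (Q : Finset Pt) :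
    ∀ (P : Finset Pt) (T : Finset (Sym2 Pt)), P ⊆ Q → EdgesOn Q T →
      ∃ T', EdgesOn P T' ∧ totalWeight T' ≤ ρ * totalWeight T ∧
        ∀ p ∈ P, ∀ q ∈ P, ReachIn (↑Q) T p q → ReachIn (↑P) T' p q := by
  classical
  induction Q using Finset.strongInduction with
  | H Q ih =>
    intro P T hPQ hT
    rcases P.eq_empty_or_nonempty with rfl | ⟨p₀, hp₀⟩
    · refine ⟨∅, fun e he => by simp at he, ?_, fun p hp => by simp at hp⟩
      have := totalWeight_nonneg T
      have h0 : totalWeight ∅ = 0 := by simp [totalWeight]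
      rw [h0]
      positivity
    set K := Q.filter fun q => ReachIn (↑Q) T p₀ q with hK
    have hKQ : K ⊆ Q := Finset.filter_subset _ _
    have hp₀K : p₀ ∈ K := Finset.mem_filter.2 ⟨hPQ hp₀, Relation.ReflTransGen.refl⟩
    have step : ∀ a b, AdjIn (↑Q) T a b → a ∈ K → b ∈ K := fun a b hab ha =>
      Finset.mem_filter.2 ⟨hab.2.1, Relation.ReflTransGen.tail (Finset.mem_filter.1 ha).2 hab⟩
    set T₁ := T.filter fun e => ∀ p ∈ e, p ∈ K with hT₁
    set T₂ := T.filter fun e => ¬ ∀ p ∈ e, p ∈ K with hT₂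
    have hw : totalWeight T₁ + totalWeight T₂ = totalWeight T :=
      Finset.sum_filter_add_sum_filter_not _ _ _
    have adj1 : ∀ a b, AdjIn (↑Q) T a b → a ∈ K → AdjIn (↑K) T₁ a b := fun a b hab ha =>
      ⟨ha, step a b hab ha, hab.2.2.1, Finset.mem_filter.2 ⟨hab.2.2.2, fun p hp => by
        rcases Sym2.mem_iff.1 hp with rfl | rfl
        · exact ha
        · exact step _ _ hab ha⟩⟩
    have adj2 : ∀ a b, AdjIn (↑Q) T a b → a ∉ K → AdjIn (↑(Q \ K)) T₂ a b := fun a b hab ha =>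
      ⟨by simpa using ⟨hab.1, ha⟩,
        by simpa using ⟨hab.2.1, fun hb => ha (step b a hab.symm hb)⟩, hab.2.2.1,
        Finset.mem_filter.2 ⟨hab.2.2.2, fun h => ha (h a (by simp))⟩⟩
    have reach1 : ∀ a b, ReachIn (↑Q) T a b → a ∈ K → b ∈ K ∧ ReachIn (↑K) T₁ a b := by
      intro a b h ha
      induction h with
      | refl => exact ⟨ha, Relation.ReflTransGen.refl⟩
      | tail _ h ih =>
        exact ⟨step _ _ h ih.1, Relation.ReflTransGen.tail ih.2 (adj1 _ _ h ih.1)⟩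
    have reach2 : ∀ a b, ReachIn (↑Q) T a b → a ∉ K → b ∉ K ∧ ReachIn (↑(Q \ K)) T₂ a b := by
      intro a b h ha
      induction h with
      | refl => exact ⟨ha, Relation.ReflTransGen.refl⟩
      | tail _ h ih =>
        exact ⟨fun hb => ih.1 (step _ _ h.symm hb),
          Relation.ReflTransGen.tail ih.2 (adj2 _ _ h ih.1)⟩
    have hE1 : EdgesOn K T₁ := fun e he =>
      ⟨(hT e (Finset.mem_filter.1 he).1).1, (Finset.mem_filter.1 he).2⟩
    have hE2 : EdgesOn (Q \ K) T₂ := by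
      intro e he
      obtain ⟨heT, hne⟩ := Finset.mem_filter.1 he
      refine ⟨(hT e heT).1, fun p hp => Finset.mem_sdiff.2 ⟨(hT e heT).2 p hp, fun hpK => hne ?_⟩⟩
      intro q hq
      by_cases hpq : p = q
      · exact hpq ▸ hpK
      · have : e = s(p, q) := (Sym2.mem_and_mem_iff hpq).1 ⟨hp, hq⟩
        exact step p q ⟨(hT e heT).2 p hp, (hT e heT).2 q hq, hpq, this ▸ heT⟩ hpK
    have hC1 : ConnOn K T₁ :=
      connOn_of_root p₀ fun z hz => (reach1 p₀ z (Finset.mem_filter.1 hz).2 hp₀K).2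
    have hne : (P ∩ K).Nonempty := ⟨p₀, Finset.mem_inter.2 ⟨hp₀, hp₀K⟩⟩
    obtain ⟨M, hM⟩ := exists_isMST hne
    have hMw := hst (P ∩ K) K hne Finset.inter_subset_right T₁ hE1 hC1 M hM
    obtain ⟨T', hT'1, hT'2, hT'3⟩ := ih (Q \ K)
      (Finset.sdiff_ssubset hKQ ⟨p₀, hp₀K⟩) (P \ K) T₂ (Finset.sdiff_subset_sdiff hPQ subset_rfl) hE2
    refine ⟨M ∪ T', (hM.1.1.mono Finset.inter_subset_left).union
      (hT'1.mono Finset.sdiff_subset), ?_, ?_⟩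
    · have := totalWeight_union_le M T'
      rw [← hw]
      linarith
    · intro p hp q hq hpq
      by_cases hpK : p ∈ K
      · have hqK := (reach1 p q hpq hpK).1
        exact (hM.1.2.1 p (Finset.mem_inter.2 ⟨hp, hpK⟩) q (Finset.mem_inter.2 ⟨hq, hqK⟩)).mono
          (by exact_mod_cast Finset.inter_subset_left) Finset.subset_union_left
      · obtain ⟨hqK, hr⟩ := reach2 p q hpq hpK
        exact (hT'3 p (Finset.mem_sdiff.2 ⟨hp, hpK⟩) q (Finset.mem_sdiff.2 ⟨hq, hqK⟩) hr).mono
          (by exact_mod_cast Finset.sdiff_subset) Finset.subset_union_right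

/-! ### Color classes of a three-colored spanning graph -/

lemma mem_edgeColor {α : Pt → Finset (Fin 3)} {c : Fin 3} {p q : Pt} :
    c ∈ edgeColor α s(p, q) ↔ c ∈ α p ∧ c ∈ α q :=
  Finset.mem_inter

/-- The black edges of `E`: those carrying all three colors. -/
def blackEdges (α : Pt → Finset (Fin 3)) (E : Finset (Sym2 Pt)) : Finset (Sym2 Pt) :=
  E.filter fun e => edgeColor α e = Finset.univ

/-- The edges of `E` that are not black. -/
def nonblackEdges (α : Pt → Finset (Fin 3)) (E : Finset (Sym2 Pt)) : Finset (Sym2 Pt) :=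
  E.filter fun e => ¬ edgeColor α e = Finset.univ

/-- The edges of `E` carrying some color of `γ`. -/
def meeting (α : Pt → Finset (Fin 3)) (γ : Finset (Fin 3)) (E : Finset (Sym2 Pt)) :
    Finset (Sym2 Pt) :=
  E.filter fun e => (edgeColor α e ∩ γ).Nonempty

/-- The black points: those carrying all three colors. -/
noncomputable abbrev blackPts (S : Finset Pt) (α : Pt → Finset (Fin 3)) : Finset Pt :=
  Sc S α 0 ∩ Sc S α 1 ∩ Sc S α 2

lemma mem_blackPts {S : Finset Pt} {α : Pt → Finset (Fin 3)} {p : Pt} :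
    p ∈ blackPts S α ↔ p ∈ S ∧ ∀ c, c ∈ α p := by
  simp only [blackPts, Sc, Finset.mem_inter, Finset.mem_filter, Fin.forall_fin_succ]
  simp
  tauto

lemma blackPts_subset_Sc (S : Finset Pt) (α : Pt → Finset (Fin 3)) (c : Fin 3) :
    blackPts S α ⊆ Sc S α c := fun _ hp =>
  Finset.mem_filter.2 ⟨(mem_blackPts.1 hp).1, (mem_blackPts.1 hp).2 c⟩

lemma Sc_restrict (S : Finset Pt) (α : Pt → Finset (Fin 3)) {γ : Finset (Fin 3)} {c : Fin 3}
    (hc : c ∈ γ) : Sc (Sγ S α γ) (restrictColor γ α) c = Sc S α c := by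
  ext p
  simp only [Sc, Sγ, restrictColor, Finset.mem_filter, Finset.mem_inter]
  exact ⟨fun h => ⟨h.1.1, h.2.1⟩, fun h => ⟨⟨h.1, c, Finset.mem_inter.2 ⟨h.2, hc⟩⟩, h.2, hc⟩⟩

/-- A color outside `γ` has an empty class in the restriction to `γ`, so imposes no condition. -/
lemma isCSG_restrict_iff (S : Finset Pt) (α : Pt → Finset (Fin 3)) (γ : Finset (Fin 3))
    (E : Finset (Sym2 Pt)) :
    IsCSG (Sγ S α γ) (restrictColor γ α) E ↔
      EdgesOn (Sγ S α γ) E ∧ ∀ c ∈ γ, ConnOn (Sc S α c) E := by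
  refine and_congr_right fun _ => ⟨fun h c hc => Sc_restrict S α hc ▸ h c, fun h c => ?_⟩
  by_cases hc : c ∈ γ
  · rw [Sc_restrict S α hc]; exact h c hc
  · intro p hp
    exact absurd (Finset.mem_inter.1 (Finset.mem_filter.1 hp).2).2 hc

lemma edgesOn_meeting {S : Finset Pt} {α : Pt → Finset (Fin 3)} {E : Finset (Sym2 Pt)}
    (hE : EdgesOn S E) (γ : Finset (Fin 3)) : EdgesOn (Sγ S α γ) (meeting α γ E) := by
  intro e he
  obtain ⟨heE, c, hc⟩ := Finset.mem_filter.1 he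
  rw [Finset.mem_inter] at hc
  refine ⟨(hE e heE).1, fun p hp => Finset.mem_filter.2 ⟨(hE e heE).2 p hp, c, ?_⟩⟩
  obtain ⟨q, rfl⟩ := Sym2.mem_iff_exists.1 hp
  exact Finset.mem_inter.2 ⟨(mem_edgeColor.1 hc.1).1, hc.2⟩

lemma Sγ_singleton (S : Finset Pt) (α : Pt → Finset (Fin 3)) (c : Fin 3) :
    Sγ S α {c} = Sc S α c := by
  ext p
  simp only [Sγ, Sc, Finset.mem_filter]
  refine and_congr_right fun _ => ⟨fun ⟨d, hd⟩ => ?_, fun h => ⟨c, by simpa using h⟩⟩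
  rw [Finset.mem_inter, Finset.mem_singleton] at hd
  exact hd.2 ▸ hd.1

lemma adj_meeting {S : Finset Pt} {α : Pt → Finset (Fin 3)} {E : Finset (Sym2 Pt)}
    {γ : Finset (Fin 3)} {c : Fin 3} (hc : c ∈ γ) {p q : Pt} (h : AdjIn (↑(Sc S α c)) E p q) :
    AdjIn (↑(Sc S α c)) (meeting α γ E) p q :=
  ⟨h.1, h.2.1, h.2.2.1, Finset.mem_filter.2 ⟨h.2.2.2, c, Finset.mem_inter.2
    ⟨mem_edgeColor.2 ⟨(Finset.mem_filter.1 h.1).2, (Finset.mem_filter.1 h.2.1).2⟩, hc⟩⟩⟩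

lemma connOn_meeting {S : Finset Pt} {α : Pt → Finset (Fin 3)} {E : Finset (Sym2 Pt)}
    {γ : Finset (Fin 3)} {c : Fin 3} (hc : c ∈ γ) (hE : ConnOn (Sc S α c) E) :
    ConnOn (Sc S α c) (meeting α γ E) := fun p hp q hq =>
  (hE p hp q hq).of_adj fun _ _ h => Relation.ReflTransGen.single (adj_meeting hc h)

lemma black_endpoints {S : Finset Pt} {α : Pt → Finset (Fin 3)} {V : Set Pt}
    (hV : V ⊆ S) {p q : Pt} (hp : p ∈ V) (hq : q ∈ V)
    (hb : edgeColor α s(p, q) = Finset.univ) : p ∈ blackPts S α ∧ q ∈ blackPts S α := by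
  have h : ∀ c, c ∈ α p ∧ c ∈ α q := fun c => mem_edgeColor.1 (hb ▸ Finset.mem_univ c)
  exact ⟨mem_blackPts.2 ⟨hV hp, fun c => (h c).1⟩, mem_blackPts.2 ⟨hV hq, fun c => (h c).2⟩⟩

/-- A connected graph on the black points makes the black edges superfluous. -/
lemma connOn_union_nonblack {S : Finset Pt} {α : Pt → Finset (Fin 3)} {E H : Finset (Sym2 Pt)}
    (hH : ConnOn (blackPts S α) H) {γ : Finset (Fin 3)} {c : Fin 3} (hc : c ∈ γ)
    (hE : ConnOn (Sc S α c) E) :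
    ConnOn (Sc S α c) (H ∪ meeting α γ (nonblackEdges α E)) := by
  have hsub : (↑(Sc S α c) : Set Pt) ⊆ S := by exact_mod_cast Finset.filter_subset _ _
  refine fun p hp q hq => (hE p hp q hq).of_adj fun a b h => ?_
  by_cases hb : edgeColor α s(a, b) = Finset.univ
  · obtain ⟨ha, hb⟩ := black_endpoints hsub h.1 h.2.1 hb
    exact (hH a ha b hb).mono (by exact_mod_cast blackPts_subset_Sc S α c)
      Finset.subset_union_left
  · have h' : AdjIn (↑(Sc S α c)) (nonblackEdges α E) a b :=
      ⟨h.1, h.2.1, h.2.2.1, Finset.mem_filter.2 ⟨h.2.2.2, hb⟩⟩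
    exact Relation.ReflTransGen.single
      ((adj_meeting hc h').mono subset_rfl Finset.subset_union_right)

lemma edgesOn_nonblack {S : Finset Pt} {α : Pt → Finset (Fin 3)} {E : Finset (Sym2 Pt)}
    (hE : EdgesOn S E) : EdgesOn S (nonblackEdges α E) :=
  fun e he => hE e (Finset.mem_filter.1 he).1

lemma weight_meeting_le (α : Pt → Finset (Fin 3)) (γ : Finset (Fin 3)) (E : Finset (Sym2 Pt)) :
    totalWeight (meeting α γ E) ≤
      totalWeight (meeting α γ (nonblackEdges α E)) + totalWeight (blackEdges α E) := by
  refine le_trans (totalWeight_mono fun e he => ?_) (totalWeight_union_le _ _)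
  simp only [meeting, nonblackEdges, blackEdges, Finset.mem_union, Finset.mem_filter] at he ⊢
  tauto

/-- A non-black edge misses one of the three colors. -/
lemma sum_weight_single_le (α : Pt → Finset (Fin 3)) (E : Finset (Sym2 Pt)) :
    totalWeight (meeting α {0} (nonblackEdges α E)) +
      totalWeight (meeting α {1} (nonblackEdges α E)) +
      totalWeight (meeting α {2} (nonblackEdges α E)) ≤ 2 * totalWeight (nonblackEdges α E) := by
  simp only [totalWeight, meeting]
  rw [Finset.sum_filter, Finset.sum_filter, Finset.sum_filter, ← Finset.sum_add_distrib,
    ← Finset.sum_add_distrib, Finset.mul_sum]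
  refine Finset.sum_le_sum fun e he => ?_
  have hw := edgeWeight_nonneg e
  have hnb := (Finset.mem_filter.1 he).2
  generalize edgeColor α e = C at hnb ⊢
  have key : ¬ ((C ∩ {0}).Nonempty ∧ (C ∩ {1}).Nonempty ∧ (C ∩ {2}).Nonempty) := by
    revert C; decide
  split_ifs <;> first | (exfalso; tauto) | linarith

/-- The minimum spanning tree `H` of the black points costs at most the black edges of `E` plus `ρ`
times the non-black edges of any one color. -/
lemma weight_H_le {ρ : ℝ} (hρ : 1 ≤ ρ) (hst : SteinerRatioBound ρ) {S : Finset Pt}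
    {α : Pt → Finset (Fin 3)} {E H : Finset (Sym2 Pt)} (hE : IsCSG S α E)
    (hH : IsMST (blackPts S α) H) (c : Fin 3) :
    totalWeight H ≤ totalWeight (blackEdges α E) +
      ρ * totalWeight (meeting α {c} (nonblackEdges α E)) := by
  have hTE := edgesOn_meeting (edgesOn_nonblack (α := α) hE.1) (α := α) {c}
  rw [Sγ_singleton] at hTE
  obtain ⟨T', -, hw, hr⟩ := steiner_components hρ hst (Sc S α c) (blackPts S α) _
    (blackPts_subset_Sc S α c) hTE
  set T := meeting α {c} (nonblackEdges α E) with hT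
  have hsub : (↑(Sc S α c) : Set Pt) ⊆ S := by exact_mod_cast Finset.filter_subset _ _
  have hconn : ConnOn (blackPts S α) (blackEdges α E ∪ T') := by
    intro p hp q hq
    -- Along a path from `p`, keep track of the last black point `x` before a run of non-black edges.
    have key : ∀ z, ReachIn (↑(Sc S α c)) E p z → ∃ x ∈ blackPts S α,
        ReachIn (↑(blackPts S α)) (blackEdges α E ∪ T') p x ∧ ReachIn (↑(Sc S α c)) T x z := by
      intro z hz
      induction hz with
      | refl => exact ⟨p, hp, Relation.ReflTransGen.refl, Relation.ReflTransGen.refl⟩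
      | @tail a b _ hab ih =>
        obtain ⟨x, hx, hpx, hxa⟩ := ih
        by_cases hb : edgeColor α s(a, b) = Finset.univ
        · obtain ⟨haB, hbB⟩ := black_endpoints hsub hab.1 hab.2.1 hb
          refine ⟨b, hbB, ?_, Relation.ReflTransGen.refl⟩
          refine Relation.ReflTransGen.tail (Relation.ReflTransGen.trans hpx
            ((hr x hx a haB hxa).mono subset_rfl Finset.subset_union_right)) ?_
          exact ⟨haB, hbB, hab.2.2.1,
            Finset.mem_union_left _ (Finset.mem_filter.2 ⟨hab.2.2.2, hb⟩)⟩
        · have h' : AdjIn (↑(Sc S α c)) (nonblackEdges α E) a b :=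
            ⟨hab.1, hab.2.1, hab.2.2.1, Finset.mem_filter.2 ⟨hab.2.2.2, hb⟩⟩
          exact ⟨x, hx, hpx,
            Relation.ReflTransGen.tail hxa (adj_meeting (Finset.mem_singleton_self c) h')⟩
    obtain ⟨x, hx, hpx, hxq⟩ := key q
      (hE.2 c p (blackPts_subset_Sc S α c hp) q (blackPts_subset_Sc S α c hq))
    exact Relation.ReflTransGen.trans hpx
      ((hr x hx q hq hxq).mono subset_rfl Finset.subset_union_right)
  have h1 := hH.weight_le hconn
  have h2 := totalWeight_union_le (blackEdges α E) T'
  linarith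

/-! ### Feasibility and cost of the candidates -/

/-- If every color lies in `γ` or equals `c`, a spanning graph for `γ` and one for `c` combine. -/
lemma isCSG_union {S : Finset Pt} {α : Pt → Finset (Fin 3)} {γ : Finset (Fin 3)} {c : Fin 3}
    (hγ : ∀ d, d ∈ γ ∨ d = c) {E₁ E₂ : Finset (Sym2 Pt)}
    (h₁ : IsCSG (Sγ S α γ) (restrictColor γ α) E₁) (hE₂ : EdgesOn (Sc S α c) E₂)
    {E : Finset (Sym2 Pt)} (hE : E = E₁ ∪ E₂) (h₂ : ConnOn (Sc S α c) E) : IsCSG S α E := by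
  subst hE
  rw [isCSG_restrict_iff] at h₁
  refine ⟨(h₁.1.mono (Finset.filter_subset _ _)).union (hE₂.mono (Finset.filter_subset _ _)), ?_⟩
  intro d
  rcases hγ d with hd | rfl
  · exact (h₁.2 d hd).mono Finset.subset_union_left
  · exact h₂

lemma weight_G_le {S : Finset Pt} {α : Pt → Finset (Fin 3)} {γ : Finset (Fin 3)} {c : Fin 3}
    {E E₁ E₂ : Finset (Sym2 Pt)} (hE : IsCSG S α E)
    (h₁ : IsMinCSG (Sγ S α γ) (restrictColor γ α) E₁) (h₂ : IsMST (Sc S α c) E₂) :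
    totalWeight (E₁ ∪ E₂) ≤ totalWeight (nonblackEdges α E) +
      totalWeight (meeting α {c} (nonblackEdges α E)) + 2 * totalWeight (blackEdges α E) := by
  have a1 := h₁.2 (meeting α γ E) ((isCSG_restrict_iff _ _ _ _).2
    ⟨edgesOn_meeting hE.1 γ, fun d hd => connOn_meeting hd (hE.2 d)⟩)
  have a2 := h₂.weight_le (connOn_meeting (Finset.mem_singleton_self c) (hE.2 c))
  have a3 := weight_meeting_le α γ E
  have a4 := weight_meeting_le α {c} E
  have a5 := totalWeight_union_le E₁ E₂
  have a6 : totalWeight (meeting α γ (nonblackEdges α E)) ≤ totalWeight (nonblackEdges α E) :=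
    totalWeight_mono (Finset.filter_subset _ _)
  linarith

lemma weight_GH_le {ρ : ℝ} (hρ : 1 ≤ ρ) (hst : SteinerRatioBound ρ) {S : Finset Pt}
    {α : Pt → Finset (Fin 3)} {γ : Finset (Fin 3)} (hγ : γ.Nonempty) {c : Fin 3}
    {E H F₁ F₂ : Finset (Sym2 Pt)} (hE : IsCSG S α E) (hH : IsMST (blackPts S α) H)
    (h₁ : ∀ F, IsCSG (Sγ S α γ) (restrictColor γ α) (H ∪ F) → totalWeight F₁ ≤ totalWeight F)
    (h₂ : ∀ F, EdgesOn (Sc S α c) F → ConnOn (Sc S α c) (H ∪ F) →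
      totalWeight F₂ ≤ totalWeight F) :
    totalWeight (H ∪ F₁ ∪ F₂) ≤ totalWeight (blackEdges α E) + totalWeight (nonblackEdges α E) +
      (1 + ρ) * totalWeight (meeting α {c} (nonblackEdges α E)) := by
  have hsub : blackPts S α ⊆ Sγ S α γ := by
    obtain ⟨d, hd⟩ := hγ
    intro p hp
    have := mem_blackPts.1 hp
    exact Finset.mem_filter.2 ⟨this.1, d, Finset.mem_inter.2 ⟨this.2 d, hd⟩⟩
  have hN := edgesOn_nonblack (α := α) hE.1
  have a1 := h₁ (meeting α γ (nonblackEdges α E)) ((isCSG_restrict_iff _ _ _ _).2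
    ⟨(hH.1.1.mono hsub).union (edgesOn_meeting hN γ),
      fun d hd => connOn_union_nonblack hH.1.2.1 hd (hE.2 d)⟩)
  have a2 := h₂ (meeting α {c} (nonblackEdges α E))
    (Sγ_singleton S α c ▸ edgesOn_meeting hN {c})
    (connOn_union_nonblack hH.1.2.1 (Finset.mem_singleton_self c) (hE.2 c))
  have a3 := totalWeight_union_le (H ∪ F₁) F₂
  have a4 := totalWeight_union_le H F₁
  have a5 : totalWeight (meeting α γ (nonblackEdges α E)) ≤ totalWeight (nonblackEdges α E) :=
    totalWeight_mono (Finset.filter_subset _ _)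
  have a6 := weight_H_le hρ hst hE hH c
  linarith

/-- Algorithm A2 (colors r = 0, b = 1, y = 2). Each of the six candidate
graphs is a CSG, and the minimum of their weights is at most `(2 - 1/(3+2ρ)) · OPT`. -/
theorem A2_approx (ρ : ℝ) (hρ : 1 ≤ ρ) (hst : SteinerRatioBound ρ)
    (S : Finset Pt) (α : Pt → Finset (Fin 3))
    (hα : ∀ p ∈ S, (α p).Nonempty)
    (hrby : (Sc S α 0 ∩ Sc S α 1 ∩ Sc S α 2).Nonempty)
    -- minimum CSGs for the two-color restricted instances
    (Erb : Finset (Sym2 Pt)) (hErb : IsMinCSG (Sγ S α {0, 1}) (restrictColor {0, 1} α) Erb)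
    (Ery : Finset (Sym2 Pt)) (hEry : IsMinCSG (Sγ S α {0, 2}) (restrictColor {0, 2} α) Ery)
    (Eby : Finset (Sym2 Pt)) (hEby : IsMinCSG (Sγ S α {1, 2}) (restrictColor {1, 2} α) Eby)
    -- minimum spanning trees of the one-color classes
    (Er : Finset (Sym2 Pt)) (hEr : IsMST (Sc S α 0) Er)
    (Eb : Finset (Sym2 Pt)) (hEb : IsMST (Sc S α 1) Eb)
    (Ey : Finset (Sym2 Pt)) (hEy : IsMST (Sc S α 2) Ey)
    -- MST of the black points
    (H : Finset (Sym2 Pt)) (hH : IsMST (Sc S α 0 ∩ Sc S α 1 ∩ Sc S α 2) H)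
    -- minimum-weight augmentations of H
    (Frb : Finset (Sym2 Pt))
    (hFrb : IsCSG (Sγ S α {0, 1}) (restrictColor {0, 1} α) (H ∪ Frb) ∧
      ∀ F, IsCSG (Sγ S α {0, 1}) (restrictColor {0, 1} α) (H ∪ F) →
        totalWeight Frb ≤ totalWeight F)
    (Fry : Finset (Sym2 Pt))
    (hFry : IsCSG (Sγ S α {0, 2}) (restrictColor {0, 2} α) (H ∪ Fry) ∧
      ∀ F, IsCSG (Sγ S α {0, 2}) (restrictColor {0, 2} α) (H ∪ F) →
        totalWeight Fry ≤ totalWeight F)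
    (Fby : Finset (Sym2 Pt))
    (hFby : IsCSG (Sγ S α {1, 2}) (restrictColor {1, 2} α) (H ∪ Fby) ∧
      ∀ F, IsCSG (Sγ S α {1, 2}) (restrictColor {1, 2} α) (H ∪ F) →
        totalWeight Fby ≤ totalWeight F)
    (Fr : Finset (Sym2 Pt))
    (hFr : EdgesOn (Sc S α 0) Fr ∧ ConnOn (Sc S α 0) (H ∪ Fr) ∧
      ∀ F, EdgesOn (Sc S α 0) F → ConnOn (Sc S α 0) (H ∪ F) →
        totalWeight Fr ≤ totalWeight F)
    (Fb : Finset (Sym2 Pt))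
    (hFb : EdgesOn (Sc S α 1) Fb ∧ ConnOn (Sc S α 1) (H ∪ Fb) ∧
      ∀ F, EdgesOn (Sc S α 1) F → ConnOn (Sc S α 1) (H ∪ F) →
        totalWeight Fb ≤ totalWeight F)
    (Fy : Finset (Sym2 Pt))
    (hFy : EdgesOn (Sc S α 2) Fy ∧ ConnOn (Sc S α 2) (H ∪ Fy) ∧
      ∀ F, EdgesOn (Sc S α 2) F → ConnOn (Sc S α 2) (H ∪ F) →
        totalWeight Fy ≤ totalWeight F)
    (Eopt : Finset (Sym2 Pt)) (hopt : IsMinCSG S α Eopt) :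
    IsCSG S α (Erb ∪ Ey) ∧ IsCSG S α (Ery ∪ Eb) ∧ IsCSG S α (Eby ∪ Er) ∧
    IsCSG S α (H ∪ Frb ∪ Fy) ∧ IsCSG S α (H ∪ Fry ∪ Fb) ∧ IsCSG S α (H ∪ Fby ∪ Fr) ∧
    min (totalWeight (Erb ∪ Ey)) (min (totalWeight (Ery ∪ Eb)) (min (totalWeight (Eby ∪ Er))
        (min (totalWeight (H ∪ Frb ∪ Fy)) (min (totalWeight (H ∪ Fry ∪ Fb))
          (totalWeight (H ∪ Fby ∪ Fr))))))
      ≤ (2 - 1 / (3 + 2 * ρ)) * totalWeight Eopt := by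
  have d01 : ∀ d : Fin 3, d ∈ ({0, 1} : Finset (Fin 3)) ∨ d = 2 := by decide
  have d02 : ∀ d : Fin 3, d ∈ ({0, 2} : Finset (Fin 3)) ∨ d = 1 := by decide
  have d12 : ∀ d : Fin 3, d ∈ ({1, 2} : Finset (Fin 3)) ∨ d = 0 := by decide
  have hsub : ∀ F F' : Finset (Sym2 Pt), H ∪ F' ⊆ H ∪ F ∪ F' := fun F F' =>
    Finset.union_subset_union_left Finset.subset_union_left
  refine ⟨isCSG_union d01 hErb.1 hEy.1.1 rfl (hEy.1.2.1.mono Finset.subset_union_right),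
    isCSG_union d02 hEry.1 hEb.1.1 rfl (hEb.1.2.1.mono Finset.subset_union_right),
    isCSG_union d12 hEby.1 hEr.1.1 rfl (hEr.1.2.1.mono Finset.subset_union_right),
    isCSG_union d01 hFrb.1 hFy.1 rfl (hFy.2.1.mono (hsub _ _)),
    isCSG_union d02 hFry.1 hFb.1 rfl (hFb.2.1.mono (hsub _ _)),
    isCSG_union d12 hFby.1 hFr.1 rfl (hFr.2.1.mono (hsub _ _)), ?_⟩
  have g1 := weight_G_le hopt.1 hErb hEy
  have g2 := weight_G_le hopt.1 hEry hEb
  have g3 := weight_G_le hopt.1 hEby hEr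
  have g4 := weight_GH_le hρ hst ⟨0, by decide⟩ hopt.1 hH hFrb.2 hFy.2.2
  have g5 := weight_GH_le hρ hst ⟨0, by decide⟩ hopt.1 hH hFry.2 hFb.2.2
  have g6 := weight_GH_le hρ hst ⟨1, by decide⟩ hopt.1 hH hFby.2 hFr.2.2
  have hA := sum_weight_single_le α Eopt
  have hNW : totalWeight (blackEdges α Eopt) + totalWeight (nonblackEdges α Eopt) =
      totalWeight Eopt := Finset.sum_filter_add_sum_filter_not _ _ _
  rw [← hNW]
  set m := min (totalWeight (Erb ∪ Ey)) (min (totalWeight (Ery ∪ Eb)) (min (totalWeight (Eby ∪ Er))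
        (min (totalWeight (H ∪ Frb ∪ Fy)) (min (totalWeight (H ∪ Fry ∪ Fb))
          (totalWeight (H ∪ Fby ∪ Fr)))))) with hm
  obtain ⟨m1, m2, m3, m4, m5, m6⟩ := by simpa only [le_min_iff] using hm.le
  have hρA := mul_le_mul_of_nonneg_left hA (by linarith : 0 ≤ 1 + ρ)
  have s1 : 3 * m ≤ 5 * totalWeight (nonblackEdges α Eopt) +
      6 * totalWeight (blackEdges α Eopt) := by linarith
  have s2 : 3 * m ≤ (5 + 2 * ρ) * totalWeight (nonblackEdges α Eopt) +
      3 * totalWeight (blackEdges α Eopt) := by linarith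
  have s3 := mul_le_mul_of_nonneg_left s1 (by linarith : 0 ≤ 2 + 2 * ρ)
  have hpos : 0 < 3 + 2 * ρ := by linarith
  have hc : 2 - 1 / (3 + 2 * ρ) = (5 + 4 * ρ) / (3 + 2 * ρ) := by
    field_simp
    ring
  rw [hc, div_mul_eq_mul_div, le_div_iff₀ hpos]
  linarith

end MCSG
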